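/- arXiv:1503.07844 — 4 statements merged into one kernel-verified Lean document; each statement's English description precedes it below -/
import Mathlib

section
/- Let X be an infinite-dimensional normed linear space. Fix real numbers r₁, r₂ with 0 < r₁ < r₂, and define the annulus A = {x ∈ X : r₁ ≤ ‖x‖ ≤ r₂} and the spheres A_d = {x ∈ X : ‖x‖ = d} for d ≥ 0. Let T : A → X be a compact map satisfying the compressive conditions: ‖T(x)‖ ≥ ‖x‖ for all x ∈ A_{r₁}, and ‖T(x)‖ ≤ ‖x‖ for all x ∈ A_{r₂}. Then T has at least one fixed point in A. -/
/-!
The map `T` is approximated by finite-rank maps, an approximate fixed point of `T` is found for each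
of them through Brouwer's theorem, and compactness of `T` turns these into a fixed point. No
completeness of `X` is needed.

**The annulus.** Let `V` be a Schauder approximation of `T` with values in a finite-dimensional
subspace `F`, scaled so that `‖V y‖ ≥ r₁` on the inner sphere. As `X` is infinite-dimensional there
is a vector `e ∉ F`. The map `V` on the inner sphere extends to the inner ball by the cone
`t y ↦ t V y + (1 - t) e`, which has no zero because `e ∉ F`; multiplied by `1 + N (1 - t)` with `N`
large, it has no fixed point in the open inner ball (`exists_large_factor`). Outside the annulus, `V`
is precomposed with the radial retraction. The resulting map has continuous bounded coefficients with
respect to finitely many vectors, so it has a fixed point (`exists_fixed_point_of_coeff`), which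
necessarily has norm at least `r₁` (`exists_fixed_point_finite_rank`). If its norm exceeds `r₂`, the
condition on the outer sphere shows that its radial projection is an approximate fixed point of `T`
(`exists_approx_fixed_point`).

**Brouwer's theorem.** The proof follows Milnor and Rogers. If a `C¹` map `g` vanishes on the sphere
of radius `R`, then for small `t > 0` the map `x ↦ x + t g x` permutes the ball `B` of radius `R`, so
that `∫_B det (1 + t g') = vol B`. The left side is a polynomial in `t`, hence the identity holds at
`t = 1` (`integral_det_id_add`). For a `C¹` retraction `r = id + g` onto the sphere the integrand
`det r'` would vanish, so there is none. A smooth approximation and a bump function then give the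
fixed point of a bounded continuous map (`brouwer_of_bounded`).
-/

open MeasureTheory Metric Set Topology Polynomial

/-! ### Volume and perturbations of the identity -/

lemma exists_polynomial_eval_eq_det {E : Type*} [NormedAddCommGroup E] [NormedSpace ℝ E]
    [FiniteDimensional ℝ E] (A : E →L[ℝ] E) :
    ∃ p : ℝ[X], p.natDegree ≤ Module.finrank ℝ E ∧
      ∀ t : ℝ, p.eval t = (ContinuousLinearMap.id ℝ E + t • A).det := by
  let b := Module.finBasis ℝ E
  let M := LinearMap.toMatrix b b (A : E →ₗ[ℝ] E)
  refine ⟨Matrix.det ((X : ℝ[X]) • M.map C + (1 : Matrix _ _ ℝ).map C), ?_, fun t => ?_⟩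
  · simpa using Polynomial.natDegree_det_X_add_C_le M 1
  · have h1 : (ContinuousLinearMap.id ℝ E + t • A).det
        = (1 + t • M).det := by
      rw [ContinuousLinearMap.det, ← LinearMap.det_toMatrix b]
      congr 1
      simp [M]
    rw [h1, ← Polynomial.coe_evalRingHom, RingHom.map_det]
    congr 1
    ext i j
    by_cases hij : i = j <;> simp [hij] <;> ring

/-- A matrix polynomial `det (1 + t A)` has bounded degree, so by Lagrange interpolation its value
at `t = 1` is a fixed linear combination of its values at small nodes. -/
lemma exists_nodes_det_one_add (E : Type*) [NormedAddCommGroup E] [NormedSpace ℝ E]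
    [FiniteDimensional ℝ E] {τ : ℝ} (hτ : 0 < τ) :
    ∃ (n : ℕ) (t c : Fin n → ℝ), (∀ i, 0 < t i ∧ t i < τ) ∧ ∑ i, c i = 1 ∧
      ∀ A : E →L[ℝ] E, (ContinuousLinearMap.id ℝ E + A).det
        = ∑ i, c i * (ContinuousLinearMap.id ℝ E + t i • A).det := by
  let d := Module.finrank ℝ E
  let t : Fin (d + 1) → ℝ := fun i => τ / (i + 2)
  have ht : Function.Injective t := by
    intro i j hij
    have hi : (0 : ℝ) < i + 2 := by positivity
    have hj : (0 : ℝ) < j + 2 := by positivity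
    simp only [t] at hij
    rw [div_eq_div_iff hi.ne' hj.ne'] at hij
    have := mul_left_cancel₀ hτ.ne' hij
    have h' : (i : ℝ) = j := by linarith
    exact Fin.ext (by exact_mod_cast h')
  have hs : (Finset.univ : Finset (Fin (d + 1))).Nonempty := Finset.univ_nonempty
  refine ⟨d + 1, t, fun i => (Lagrange.basis Finset.univ t i).eval 1, fun i => ⟨by positivity, ?_⟩,
    ?_, fun A => ?_⟩
  · have : (0 : ℝ) ≤ i := by positivity
    simp only [t]
    rw [div_lt_iff₀ (by positivity)]
    nlinarith
  · rw [← eval_finsetSum, Lagrange.sum_basis ht.injOn hs, eval_one]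
  · obtain ⟨p, hp, hev⟩ := exists_polynomial_eval_eq_det A
    have hdeg : p.degree < ((Finset.univ : Finset (Fin (d + 1))).card : WithBot ℕ) := by
      rw [Finset.card_univ, Fintype.card_fin]
      refine lt_of_le_of_lt degree_le_natDegree ?_
      exact_mod_cast Nat.lt_succ_of_le hp
    have h1 := hev 1
    rw [one_smul] at h1
    rw [← h1]
    conv_lhs => rw [Lagrange.eq_interpolate (v := t) ht.injOn hdeg, Lagrange.interpolate_apply]
    rw [eval_finsetSum]
    refine Finset.sum_congr rfl fun i _ => ?_
    rw [eval_mul, eval_C, hev, mul_comm]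

lemma det_id_add_pos {E : Type*} [NormedAddCommGroup E] [NormedSpace ℝ E]
    [FiniteDimensional ℝ E] (A : E →L[ℝ] E) (hA : ‖A‖ < 1) :
    0 < (ContinuousLinearMap.id ℝ E + A).det := by
  let φ : ℝ → ℝ := fun s => (ContinuousLinearMap.id ℝ E + s • A).det
  have hφ : Continuous φ := ContinuousLinearMap.continuous_det.comp (by fun_prop)
  have hne : ∀ s ∈ Icc (0 : ℝ) 1, φ s ≠ 0 := by
    intro s hs h0
    have h0' : LinearMap.det ((ContinuousLinearMap.id ℝ E + s • A : E →L[ℝ] E) : E →ₗ[ℝ] E) = 0 := h0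
    have hk := LinearMap.bot_lt_ker_of_det_eq_zero h0'
    obtain ⟨v, hv, hv0⟩ := (Submodule.ne_bot_iff _).1 hk.ne'
    have hv1 : v + s • A v = 0 := by simpa using hv
    have hv2 : ‖v‖ = s * ‖A v‖ := by
      have := congrArg norm (eq_neg_of_add_eq_zero_left hv1)
      rwa [norm_neg, norm_smul, Real.norm_of_nonneg hs.1] at this
    have h3 := A.le_opNorm v
    have hvp : 0 < ‖v‖ := norm_pos_iff.2 hv0
    have h4 : s * ‖A v‖ ≤ ‖A v‖ := mul_le_of_le_one_left (norm_nonneg _) hs.2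
    nlinarith
  have h0 : φ 0 = 1 := by simp [φ, ContinuousLinearMap.det]
  by_contra hcon
  have h1 : φ 1 ≤ 0 := by simpa [φ] using hcon
  have := intermediate_value_Icc' (zero_le_one' ℝ) hφ.continuousOn
  obtain ⟨s, hs, hs0⟩ := this ⟨h1, by rw [h0]; exact zero_le_one⟩
  exact hne s hs hs0

/-- A map which is Lipschitz on a closed ball and vanishes on the bounding sphere stays Lipschitz,
with the same constant, when extended by zero. -/
lemma lipschitz_extend_zero {E : Type*} [NormedAddCommGroup E] [NormedSpace ℝ E]
    {g : E → E} {R : ℝ} {L : NNReal} (hL : LipschitzOnWith L g (closedBall 0 R))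
    (hg0 : ∀ x, ‖x‖ = R → g x = 0) :
    ∀ x y, ‖(closedBall (0 : E) R).indicator g x - (closedBall (0 : E) R).indicator g y‖
      ≤ L * ‖x - y‖ := by
  have key : ∀ x ∈ closedBall (0 : E) R, ∀ y ∉ closedBall (0 : E) R, ‖g x‖ ≤ L * ‖x - y‖ := by
    intro x hx y hy
    rw [mem_closedBall_zero_iff] at hx hy
    obtain ⟨z, hz, hzR⟩ := (convex_segment x y).isPreconnected.intermediate_value
      (left_mem_segment ℝ x y) (right_mem_segment ℝ x y) continuous_norm.continuousOn
      ⟨hx, (not_le.1 hy).le⟩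
    have h1 := hL.norm_sub_le (mem_closedBall_zero_iff.2 hx) (mem_closedBall_zero_iff.2 hzR.le)
    rw [hg0 z hzR, sub_zero] at h1
    have h2 := dist_add_dist_of_mem_segment hz
    rw [dist_eq_norm, dist_eq_norm, dist_eq_norm] at h2
    refine h1.trans (mul_le_mul_of_nonneg_left ?_ L.2)
    linarith [norm_nonneg (z - y)]
  intro x y
  by_cases hx : x ∈ closedBall (0 : E) R <;> by_cases hy : y ∈ closedBall (0 : E) R
  · simpa [indicator_of_mem hx, indicator_of_mem hy] using hL.norm_sub_le hx hy
  · simpa [indicator_of_mem hx, indicator_of_notMem hy] using key x hx y hy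
  · rw [indicator_of_notMem hx, indicator_of_mem hy, zero_sub, norm_neg, norm_sub_rev]
    exact key y hy x hx
  · rw [indicator_of_notMem hx, indicator_of_notMem hy, sub_zero, norm_zero]
    positivity

/-- A small perturbation of the identity that is supported in a closed ball permutes that ball. -/
lemma bijOn_closedBall_perturbation {E : Type*} [NormedAddCommGroup E] [NormedSpace ℝ E]
    [CompleteSpace E] {g : E → E} {R : ℝ} {L : NNReal}
    (hL : LipschitzOnWith L g (closedBall 0 R))
    (hg0 : ∀ x, ‖x‖ = R → g x = 0) {t : ℝ} (ht : 0 < t) (htL : t * L < 1) :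
    BijOn (fun x => x + t • g x) (closedBall 0 R) (closedBall 0 R) := by
  set B := closedBall (0 : E) R
  set ψ := B.indicator g with hψ
  have hlip := lipschitz_extend_zero hL hg0
  let h : E → E := fun x => x + t • ψ x
  have hinj : Function.Injective h := by
    intro x y hxy
    have h1 : x - y = -(t • (ψ x - ψ y)) := by
      have : x + t • ψ x = y + t • ψ y := hxy
      rw [smul_sub, neg_sub, sub_eq_sub_iff_add_eq_add, this, add_comm]
    have h2 : ‖x - y‖ ≤ t * L * ‖x - y‖ := by
      calc ‖x - y‖ = t * ‖ψ x - ψ y‖ := by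
            conv_lhs => rw [h1, norm_neg, norm_smul, Real.norm_of_nonneg ht.le]
        _ ≤ t * (L * ‖x - y‖) := mul_le_mul_of_nonneg_left (hlip x y) ht.le
        _ = _ := by ring
    have h3 : ‖x - y‖ = 0 := by nlinarith [norm_nonneg (x - y)]
    exact sub_eq_zero.1 (norm_eq_zero.1 h3)
  have hsurj : Function.Surjective h := by
    intro y
    let K : NNReal := ⟨t, ht.le⟩ * L
    have hK : ContractingWith K (fun x => y - t • ψ x) := by
      refine ⟨by rw [← NNReal.coe_lt_coe]; exact htL, LipschitzWith.of_dist_le_mul fun a b => ?_⟩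
      rw [dist_eq_norm, dist_eq_norm, sub_sub_sub_cancel_left, ← smul_sub, norm_smul,
        Real.norm_of_nonneg ht.le, norm_sub_rev]
      calc t * ‖ψ a - ψ b‖ ≤ t * (L * ‖a - b‖) := mul_le_mul_of_nonneg_left (hlip a b) ht.le
        _ = (t * L) * ‖a - b‖ := by ring
    refine ⟨hK.fixedPoint, ?_⟩
    have hfix : y - t • ψ hK.fixedPoint = hK.fixedPoint := hK.fixedPoint_isFixedPt
    exact eq_sub_iff_add_eq.1 hfix.symm
  have hout : ∀ x ∉ B, h x = x := fun x hx => by simp [h, hψ, indicator_of_notMem hx]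
  have hin : EqOn h (fun x => x + t • g x) B := fun x hx => by
    simp [h, hψ, indicator_of_mem hx]
  refine BijOn.congr ⟨fun x hx => ?_, hinj.injOn, fun y hy => ?_⟩ hin
  · by_contra hc
    have hx' : h x = x := hinj (hout _ hc)
    exact hc (hx'.symm ▸ hx)
  · obtain ⟨x, rfl⟩ := hsurj y
    by_cases hx : x ∈ B
    · exact ⟨x, hx, rfl⟩
    · exact absurd (hout x hx ▸ hy) hx

/-- The volume identity `∫_B det (1 + g') = vol B` for a `C¹` map `g` vanishing on the boundary of
the ball `B`. For small multiples of `g` it is the change of variables formula; it extends to `g`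
itself because the integrand is polynomial in the multiple. -/
lemma integral_det_id_add {E : Type*} [NormedAddCommGroup E] [NormedSpace ℝ E]
    [FiniteDimensional ℝ E] [MeasurableSpace E] [BorelSpace E] (μ : Measure E)
    [μ.IsAddHaarMeasure] {g : E → E} (hg : ContDiff ℝ 1 g) {R : ℝ}
    (hg0 : ∀ x, ‖x‖ = R → g x = 0) :
    ∫ x in closedBall (0 : E) R, (ContinuousLinearMap.id ℝ E + fderiv ℝ g x).det ∂μ
      = μ.real (closedBall 0 R) := by
  have hcont : Continuous (fderiv ℝ g) := hg.continuous_fderiv one_ne_zero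
  have hcpt : IsCompact (closedBall (0 : E) R) := isCompact_closedBall 0 R
  obtain ⟨C, hC⟩ := hcpt.exists_bound_of_continuousOn hcont.continuousOn
  set L : NNReal := ⟨max C 0, le_max_right _ _⟩
  have hbd : ∀ x ∈ closedBall (0 : E) R, ‖fderiv ℝ g x‖ ≤ L := fun x hx =>
    (hC x hx).trans (le_max_left _ _)
  have hdiff : ∀ x, HasFDerivAt g (fderiv ℝ g x) x := fun x =>
    (hg.differentiable one_ne_zero x).hasFDerivAt
  have hL : LipschitzOnWith L g (closedBall 0 R) :=
    (convex_closedBall (0 : E) R).lipschitzOnWith_of_nnnorm_hasFDerivWithin_le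
      (fun x _ => (hdiff x).hasFDerivWithinAt) hbd
  have hLp : (0 : ℝ) < L + 1 := by positivity
  obtain ⟨n, t, c, ht, hc, hdet⟩ := exists_nodes_det_one_add E (inv_pos.2 hLp)
  have htL : ∀ i, t i * L < 1 := fun i => by
    have h1 := (ht i).2
    rw [lt_inv_comm₀ (ht i).1 hLp] at h1
    have h2 : (L : ℝ) + 1 < (t i)⁻¹ := h1
    have h3 : t i * (t i)⁻¹ = 1 := mul_inv_cancel₀ (ht i).1.ne'
    nlinarith [(ht i).1]
  have hsmall : ∀ i, ∫ x in closedBall (0 : E) R,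
      (ContinuousLinearMap.id ℝ E + t i • fderiv ℝ g x).det ∂μ = μ.real (closedBall 0 R) := by
    intro i
    have hb := bijOn_closedBall_perturbation hL hg0 (ht i).1 (htL i)
    have := integral_image_eq_integral_abs_det_fderiv_smul μ
      (f := fun x => x + t i • g x) (f' := fun x => ContinuousLinearMap.id ℝ E + t i • fderiv ℝ g x)
      (measurableSet_closedBall (x := (0 : E)) (ε := R))
      (fun x _ => ((hasFDerivAt_id x).add ((hdiff x).const_smul (t i))).hasFDerivWithinAt)
      hb.injOn (fun _ => (1 : ℝ))
    rw [hb.image_eq] at this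
    simp only [smul_eq_mul, mul_one, integral_const, measureReal_restrict_apply_univ] at this
    rw [this]
    refine setIntegral_congr_fun measurableSet_closedBall fun x hx => ?_
    refine (abs_of_pos (det_id_add_pos _ ?_)).symm
    rw [norm_smul, Real.norm_of_nonneg (ht i).1.le]
    exact (mul_le_mul_of_nonneg_left (hbd x hx) (ht i).1.le).trans_lt (htL i)
  rw [setIntegral_congr_fun measurableSet_closedBall fun x _ => hdet (fderiv ℝ g x)]
  rw [integral_finsetSum]
  · simp_rw [integral_const_mul, hsmall]
    rw [← Finset.sum_mul, hc, one_mul]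
  · intro i _
    refine Integrable.const_mul ?_ _
    exact (ContinuousLinearMap.continuous_det.comp (by fun_prop)).continuousOn.integrableOn_compact
      hcpt

/-! ### Brouwer's fixed point theorem -/

/-- **No `C¹` retraction**, in the form needed below: a `C¹` vector field equal to the identity on a
sphere has a zero. -/
lemma exists_zero_of_eq_id_on_sphere {E : Type*} [NormedAddCommGroup E] [InnerProductSpace ℝ E]
    [FiniteDimensional ℝ E] {u : E → E} (hu : ContDiff ℝ 1 u) {R : ℝ} (hR : 0 < R)
    (hid : ∀ x, ‖x‖ = R → u x = x) : ∃ x, u x = 0 := by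
  by_contra! hne
  let _ : MeasurableSpace E := borel E
  have : BorelSpace E := ⟨rfl⟩
  let r : E → E := fun x => (R * ‖u x‖⁻¹) • u x
  have hr : ContDiff ℝ 1 r :=
    (contDiff_const.mul ((hu.norm ℝ hne).inv fun x => norm_ne_zero_iff.2 (hne x))).smul hu
  have hrn : ∀ x, ‖r x‖ = R := fun x => by
    have := norm_ne_zero_iff.2 (hne x)
    simp only [r, norm_smul, norm_mul, norm_inv, norm_norm, Real.norm_of_nonneg hR.le]
    field_simp
  have hrid : ∀ x, ‖x‖ = R → r x = x := fun x hx => by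
    simp [r, hid x hx, hx, hR.ne']
  have hdet : ∀ x, (fderiv ℝ r x).det = 0 := by
    intro x
    -- `r` has constant norm, so `r x` is orthogonal to the range of its derivative at `x`
    by_contra hd
    have hsurj : Function.Surjective (fderiv ℝ r x) := by
      have hunit : IsUnit (LinearMap.det (fderiv ℝ r x : E →ₗ[ℝ] E)) := isUnit_iff_ne_zero.2 hd
      exact ((Module.End.isUnit_iff _).1 ((LinearMap.isUnit_iff_isUnit_det _).2 hunit)).2
    obtain ⟨v, hv⟩ := hsurj (r x)
    have h1 : HasFDerivAt r (fderiv ℝ r x) x := (hr.differentiable one_ne_zero x).hasFDerivAt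
    have h2 := h1.norm_sq
    have h3 : (fun y => ‖r y‖ ^ 2) = fun _ => R ^ 2 := by ext y; rw [hrn]
    rw [h3] at h2
    have h4 := congrArg (fun F => F v) (h2.unique (hasFDerivAt_const _ _))
    simp [hv] at h4
    have := hrn x
    rw [h4, norm_zero] at this
    exact hR.ne this
  have hg : ContDiff ℝ 1 fun x => r x - x := hr.sub contDiff_id
  have hint := integral_det_id_add (volume : Measure E) hg (R := R)
    fun x hx => by simp [hrid x hx]
  have hz : ∀ x, (ContinuousLinearMap.id ℝ E + fderiv ℝ (fun x => r x - x) x).det = 0 := by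
    intro x
    rw [fderiv_fun_sub (hr.differentiable one_ne_zero x) differentiableAt_fun_id, fderiv_fun_id,
      add_sub_cancel, hdet x]
  simp only [hz, integral_zero] at hint
  have hpos : 0 < volume.real (closedBall (0 : E) R) :=
    ENNReal.toReal_pos (measure_closedBall_pos _ _ hR).ne' measure_closedBall_lt_top.ne
  exact hpos.ne hint

/-- **Brouwer's fixed point theorem** for bounded continuous self-maps of a Euclidean space. -/
lemma brouwer_of_bounded {E : Type*} [NormedAddCommGroup E] [InnerProductSpace ℝ E]
    [FiniteDimensional ℝ E] {f : E → E} (hf : Continuous f) {M : ℝ} (hM : ∀ x, ‖f x‖ ≤ M) :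
    ∃ x, f x = x := by
  by_contra! hne
  have hM0 : 0 ≤ M := (norm_nonneg _).trans (hM 0)
  obtain ⟨x₀, -, hx₀⟩ := (isCompact_closedBall (0 : E) (M + 1)).exists_isMinOn
    ⟨0, by simp; linarith⟩ (f := fun x => ‖f x - x‖) (by fun_prop)
  set δ := ‖f x₀ - x₀‖ with hδ
  have hδ0 : 0 < δ := norm_pos_iff.2 (sub_ne_zero.2 (hne x₀))
  have hε : 0 < min δ 1 := lt_min hδ0 one_pos
  obtain ⟨p, hp, hpf, -⟩ := hf.exists_contDiff_approx 1 continuous_const fun _ => hε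
  let χ : ContDiffBump (0 : E) := ⟨M + 1, M + 2, by linarith, by linarith⟩
  have hu : ContDiff ℝ 1 fun x => x - χ x • p x := contDiff_id.sub (χ.contDiff.smul hp)
  obtain ⟨x, hx⟩ := exists_zero_of_eq_id_on_sphere hu (R := M + 2) (by linarith) fun x hx => by
    have : χ x = 0 := χ.zero_of_le_dist (by simp [hx, χ])
    simp [this]
  have hx' : x = χ x • p x := sub_eq_zero.1 hx
  have hd := hpf x
  rw [dist_eq_norm] at hd
  have hxM : ‖x‖ ≤ M + 1 := by
    rw [hx', norm_smul, Real.norm_of_nonneg χ.nonneg]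
    have h1 : ‖p x‖ ≤ M + 1 := by
      have := norm_add_le (p x - f x) (f x)
      rw [sub_add_cancel] at this
      linarith [hM x, min_le_right δ 1]
    exact (mul_le_of_le_one_left (norm_nonneg _) χ.le_one).trans h1
  have hχ : χ x = 1 := χ.one_of_mem_closedBall (mem_closedBall_zero_iff.2 hxM)
  rw [hχ, one_smul] at hx'
  have := hx₀ (mem_closedBall_zero_iff.2 hxM)
  simp only [mem_ofPred_eq] at this
  rw [← hx', norm_sub_rev] at hd
  linarith [min_le_left δ 1]

/-- Brouwer's theorem for maps that take values in the span of finitely many vectors, with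
continuous bounded coefficients; the vectors need not be independent. -/
lemma exists_fixed_point_of_coeff {X : Type*} [NormedAddCommGroup X] [NormedSpace ℝ X]
    {ι : Type*} [Fintype ι] (q : ι → X) (c : ι → X → ℝ) (hc : ∀ i, Continuous (c i))
    {M : ℝ} (hM : ∀ i x, |c i x| ≤ M) : ∃ x, x = ∑ i, c i x • q i := by
  let S : EuclideanSpace ℝ ι → X := fun l => ∑ i, l i • q i
  let f : EuclideanSpace ℝ ι → EuclideanSpace ℝ ι := fun l => WithLp.toLp 2 fun i => c i (S l)
  have hS : Continuous S := by fun_prop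
  have hf : Continuous f := by
    refine (PiLp.continuous_toLp 2 _).comp (continuous_pi fun i => (hc i).comp hS)
  have hfb : ∀ l, ‖f l‖ ≤ √(∑ _i : ι, M ^ 2) := fun l => by
    rw [EuclideanSpace.norm_eq]
    refine Real.sqrt_le_sqrt (Finset.sum_le_sum fun i _ => ?_)
    exact pow_le_pow_left₀ (norm_nonneg _) (hM i _) 2
  obtain ⟨l, hl⟩ := brouwer_of_bounded hf hfb
  refine ⟨S l, ?_⟩
  have hli : ∀ i, c i (S l) = l i := fun i => congrArg (fun v : EuclideanSpace ℝ ι => v i) hl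
  simp only [hli]
  rfl

/-! ### Finite-rank approximation -/

/-- **Schauder projection**: a compact set is approximated within `η` by combinations of finitely
many of its points, with continuous coefficients. -/
lemma exists_schauder_weights {X : Type*} [NormedAddCommGroup X] [NormedSpace ℝ X]
    {C : Set X} (hC : IsCompact C) {η : ℝ} (hη : 0 < η) :
    ∃ (s : Finset X) (w : X → X → ℝ), (∀ a ∈ s, ∀ y, |w a y| ≤ 1) ∧
      (∀ a, ContinuousOn (w a) C) ∧ ∀ y ∈ C, ‖∑ a ∈ s, w a y • a - y‖ ≤ η := by
  obtain ⟨t, -, ht, hcov⟩ := hC.finite_cover_balls hη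
  let s := ht.toFinset
  let v : X → X → ℝ := fun a y => max 0 (η - ‖y - a‖)
  have hv0 : ∀ a y, 0 ≤ v a y := fun a y => le_max_left _ _
  have hpos : ∀ y ∈ C, 0 < ∑ a ∈ s, v a y := by
    intro y hy
    obtain ⟨a, ha, hya⟩ := mem_iUnion₂.1 (hcov hy)
    rw [mem_ball, dist_eq_norm] at hya
    exact Finset.sum_pos' (fun a _ => hv0 a y)
      ⟨a, ht.mem_toFinset.2 ha, lt_max_of_lt_right (by linarith)⟩
  refine ⟨s, fun a y => v a y / ∑ b ∈ s, v b y, fun a ha y => ?_, fun a => ?_, fun y hy => ?_⟩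
  · have h1 := Finset.single_le_sum (fun b _ => hv0 b y) ha
    rw [abs_of_nonneg (div_nonneg (hv0 a y) (Finset.sum_nonneg fun b _ => hv0 b y))]
    exact div_le_one_of_le₀ h1 (Finset.sum_nonneg fun b _ => hv0 b y)
  · exact ContinuousOn.div (by fun_prop) (by fun_prop) fun y hy => (hpos y hy).ne'
  · have hS := hpos y hy
    have h1 : ∑ a ∈ s, (v a y / ∑ b ∈ s, v b y) • a - y
        = ∑ a ∈ s, (v a y / ∑ b ∈ s, v b y) • (a - y) := by
      simp_rw [smul_sub]
      rw [Finset.sum_sub_distrib, ← Finset.sum_smul, ← Finset.sum_div, div_self hS.ne', one_smul]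
    rw [h1]
    calc ‖∑ a ∈ s, (v a y / ∑ b ∈ s, v b y) • (a - y)‖
        ≤ ∑ a ∈ s, ‖(v a y / ∑ b ∈ s, v b y) • (a - y)‖ := norm_sum_le _ _
      _ ≤ ∑ a ∈ s, (v a y / ∑ b ∈ s, v b y) * η := by
          refine Finset.sum_le_sum fun a _ => ?_
          rw [norm_smul, Real.norm_of_nonneg (div_nonneg (hv0 a y) hS.le)]
          -- a point at distance at least `η` carries weight zero
          rcases le_total ‖y - a‖ η with h | h
          · rw [norm_sub_rev]
            exact mul_le_mul_of_nonneg_left h (div_nonneg (hv0 a y) hS.le)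
          · have : v a y = 0 := max_eq_left (by linarith)
            simp [this]
      _ = η := by rw [← Finset.sum_mul, ← Finset.sum_div, div_self hS.ne', one_mul]

/-- A compact map on `A` with `r ≤ ‖T y‖` on the sphere of radius `r` has finite-rank
approximations which satisfy the same lower bound. -/
lemma exists_finite_rank_approx {X : Type*} [NormedAddCommGroup X] [NormedSpace ℝ X]
    {A : Set X} {T : X → X} (hT : ContinuousOn T A) (hTc : IsCompact (closure (T '' A)))
    {r : ℝ} (hr : 0 < r) (hrA : ∀ y, ‖y‖ = r → y ∈ A) (hTr : ∀ y, ‖y‖ = r → r ≤ ‖T y‖)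
    {ε : ℝ} (hε : 0 < ε) :
    ∃ (s : Finset X) (c : X → X → ℝ) (M : ℝ), (∀ a ∈ s, ∀ y, |c a y| ≤ M) ∧
      (∀ a, ContinuousOn (c a) A) ∧ (∀ y ∈ A, ‖∑ a ∈ s, c a y • a - T y‖ ≤ ε) ∧
      ∀ y, ‖y‖ = r → r ≤ ‖∑ a ∈ s, c a y • a‖ := by
  obtain ⟨K₀, hK₀⟩ := hTc.isBounded.exists_norm_le
  set K := max K₀ 0
  have hTA : ∀ y ∈ A, T y ∈ closure (T '' A) := fun y hy => subset_closure ⟨y, hy, rfl⟩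
  have hK : ∀ y ∈ A, ‖T y‖ ≤ K := fun y hy => (hK₀ _ (hTA y hy)).trans (le_max_left _ _)
  have hK0 : 0 ≤ K := le_max_right _ _
  set η := min (r / 2) (ε / (2 + 2 * K / r)) with hη
  have hden : 0 < 2 + 2 * K / r := by positivity
  have hη0 : 0 < η := lt_min (by positivity) (by positivity)
  have hη1 : η ≤ r / 2 := min_le_left _ _
  have hη2 : η * (2 + 2 * K / r) ≤ ε := (le_div_iff₀ hden).1 (min_le_right _ _)
  obtain ⟨s, w, hw1, hwc, hw⟩ := exists_schauder_weights hTc hη0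
  -- the factor `1 + κ` makes up for the loss of `η` on the sphere
  set κ := 2 * η / r with hκ
  have hκ0 : 0 ≤ κ := by positivity
  have hκr : κ * r = 2 * η := by rw [hκ]; field_simp
  have hsum : ∀ y, ∑ a ∈ s, ((1 + κ) * w a (T y)) • a = (1 + κ) • ∑ a ∈ s, w a (T y) • a := by
    intro y
    simp_rw [Finset.smul_sum, mul_smul]
  refine ⟨s, fun a y => (1 + κ) * w a (T y), 1 + κ, fun a ha y => ?_, fun a => ?_,
    fun y hy => ?_, fun y hy => ?_⟩
  · rw [abs_mul, abs_of_nonneg (by positivity : 0 ≤ 1 + κ)]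
    exact mul_le_of_le_one_right (by positivity) (hw1 a ha _)
  · exact continuousOn_const.mul ((hwc a).comp hT hTA)
  · rw [hsum]
    have h1 := hw _ (hTA y hy)
    set S := ∑ a ∈ s, w a (T y) • a
    have h2 : (1 + κ) • S - T y = (1 + κ) • (S - T y) + κ • T y := by
      rw [smul_sub, add_smul 1 κ (T y), one_smul]; abel
    rw [h2]
    calc ‖(1 + κ) • (S - T y) + κ • T y‖ ≤ (1 + κ) * ‖S - T y‖ + κ * ‖T y‖ := by
          refine (norm_add_le _ _).trans_eq ?_
          rw [norm_smul, norm_smul, Real.norm_of_nonneg hκ0,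
            Real.norm_of_nonneg (by positivity : 0 ≤ 1 + κ)]
      _ ≤ (1 + κ) * η + κ * K := by gcongr; exact hK y hy
      _ ≤ η * (2 + 2 * K / r) := by
          have h3 : κ * K = η * (2 * K / r) := by rw [hκ]; ring
          have h4 : κ ≤ 1 := by rw [hκ, div_le_one hr]; linarith
          nlinarith
      _ ≤ ε := hη2
  · rw [hsum, norm_smul, Real.norm_of_nonneg (by positivity : 0 ≤ 1 + κ)]
    have h1 := hw _ (hTA y (hrA y hy))
    set S := ∑ a ∈ s, w a (T y) • a
    have h2 : r - η ≤ ‖S‖ := by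
      have := norm_sub_norm_le (T y) S
      rw [norm_sub_rev] at this
      linarith [hTr y hy]
    have h3 : (1 + κ) * (r - η) ≤ (1 + κ) * ‖S‖ := by gcongr
    have h4 : κ * η ≤ η := mul_le_of_le_one_left hη0.le (by rw [hκ, div_le_one hr]; linarith)
    nlinarith

/-! ### Compressive maps on an annulus -/

/-- The point `(1 - σ) v + σ e` of the segment from `v ∈ F` to `e ∉ F` becomes longer than
`(1 - σ) r` once it is multiplied by `1 + N σ`, for one `N` that serves all `v` with `‖v‖ ≥ r`. At
`σ = 1` no bound on `v` is asked for, as `v` drops out. -/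
lemma exists_large_factor {X : Type*} [NormedAddCommGroup X] [NormedSpace ℝ X]
    (F : Submodule ℝ X) [FiniteDimensional ℝ F] {e : X} (he : e ∉ F) {r : ℝ} (hr : 0 < r) :
    ∃ N : ℝ, 0 ≤ N ∧ ∀ v ∈ F, ∀ σ : ℝ, 0 < σ → σ ≤ 1 → (σ < 1 → r ≤ ‖v‖) →
      (1 - σ) * r < (1 + N * σ) * ‖(1 - σ) • v + σ • e‖ := by
  have hcl : IsClosed (F : Set X) := F.closed_of_finiteDimensional
  set d := infDist e (F : Set X)
  have hd : 0 < d := (hcl.notMem_iff_infDist_pos ⟨0, F.zero_mem⟩).1 he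
  set K := ‖e‖
  have hK : 0 ≤ K := norm_nonneg e
  set m := r * d / (r + K + d) with hm
  have hm0 : 0 < m := by positivity
  refine ⟨(K + 1) / m, by positivity, fun v hv σ hσ hσ1 hvr => ?_⟩
  set u := ‖(1 - σ) • v + σ • e‖ with hu
  have h1 : (1 - σ) * r - σ * K ≤ u := by
    have h2 : (1 - σ) * r ≤ (1 - σ) * ‖v‖ := by
      rcases hσ1.lt_or_eq with h | h
      · exact mul_le_mul_of_nonneg_left (hvr h) (by linarith)
      · simp [h]
    have h3 := norm_sub_le ((1 - σ) • v + σ • e) (σ • e)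
    rw [add_sub_cancel_right, norm_smul, norm_smul, Real.norm_of_nonneg hσ.le,
      Real.norm_of_nonneg (by linarith : 0 ≤ 1 - σ)] at h3
    linarith
  have h2 : σ * d ≤ u := by
    have h3 : (1 - σ) • v + σ • e = σ • (e - (-(σ⁻¹ * (1 - σ))) • v) := by
      rw [smul_sub, smul_smul, mul_neg, mul_inv_cancel_left₀ hσ.ne', neg_smul, sub_neg_eq_add, add_comm]
    rw [hu, h3, norm_smul, Real.norm_of_nonneg hσ.le, ← dist_eq_norm]
    exact mul_le_mul_of_nonneg_left (infDist_le_dist_of_mem (F.smul_mem _ hv)) hσ.le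
  -- weighting `h1` by `d` and `h2` by `r + K` eliminates `σ`
  have h3 : m ≤ u := by
    rw [hm, div_le_iff₀ (by positivity)]
    nlinarith
  have h4 : K + 1 ≤ (K + 1) / m * u := by
    rw [div_mul_eq_mul_div, le_div_iff₀ hm0]
    exact mul_le_mul_of_nonneg_left h3 (by positivity)
  nlinarith [mul_le_mul_of_nonneg_left h4 hσ.le]

/-- The finite-rank case. On the annulus the map is `y ↦ ∑ a ∈ s, c a y • a`. It is extended beyond
the outer sphere by radial retraction, and to the inner ball by a cone with apex a vector outside the span
of `s`; the extension has no fixed point in the open inner ball. -/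
lemma exists_fixed_point_finite_rank {X : Type*} [NormedAddCommGroup X] [NormedSpace ℝ X]
    (hinf : ¬ FiniteDimensional ℝ X) {r₁ r₂ : ℝ} (hr₁ : 0 < r₁) (hr : r₁ < r₂)
    (s : Finset X) (c : X → X → ℝ) {M : ℝ} (hM : ∀ a ∈ s, ∀ y, |c a y| ≤ M)
    (hc : ∀ a, ContinuousOn (c a) {x : X | r₁ ≤ ‖x‖ ∧ ‖x‖ ≤ r₂})
    (hcr : ∀ y, ‖y‖ = r₁ → r₁ ≤ ‖∑ a ∈ s, c a y • a‖) :
    ∃ x : X, r₁ ≤ ‖x‖ ∧ x = ∑ a ∈ s, c a ((min r₂ ‖x‖ / ‖x‖) • x) • a := by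
  let F := Submodule.span ℝ (s : Set X)
  have hFfin : FiniteDimensional ℝ F := FiniteDimensional.span_finset ℝ s
  obtain ⟨e, he⟩ : ∃ e, e ∉ F := by
    by_contra! h
    have htop : F = ⊤ := (Submodule.eq_top_iff').2 h
    rw [htop] at hFfin
    exact hinf (Module.finite_def.2 ((Submodule.fg_top _).1 (Module.finite_def.1 hFfin)))
  obtain ⟨N, hN, hfac⟩ := exists_large_factor F he hr₁
  let P : X → X := fun x => (max r₁ (min r₂ ‖x‖) / ‖x‖) • x
  let t : X → ℝ := fun x => min 1 (‖x‖ / r₁)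
  have htc : Continuous t := by fun_prop
  have ht0 : ∀ x, 0 ≤ t x := fun x => le_min zero_le_one (by positivity)
  have ht1 : ∀ x, t x ≤ 1 := fun x => min_le_left _ _
  have hPn : ∀ x ≠ 0, ‖P x‖ = max r₁ (min r₂ ‖x‖) := fun x hx => by
    have := norm_ne_zero_iff.2 hx
    rw [norm_smul, norm_div, norm_norm, div_mul_cancel₀ _ this]
    exact Real.norm_of_nonneg (le_max_of_le_left hr₁.le)
  have hPA : ∀ x ≠ 0, P x ∈ {x : X | r₁ ≤ ‖x‖ ∧ ‖x‖ ≤ r₂} := fun x hx => by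
    refine ⟨?_, ?_⟩ <;> rw [hPn x hx]
    · exact le_max_left _ _
    · exact max_le hr.le (min_le_left _ _)
  have hPc : ContinuousOn P {0}ᶜ := by
    refine ContinuousOn.smul (ContinuousOn.div (by fun_prop) (by fun_prop) fun x hx => ?_)
      continuousOn_id
    exact norm_ne_zero_iff.2 hx
  have htcP : ∀ a ∈ s, Continuous fun x => t x * c a (P x) := by
    intro a ha
    rw [continuous_iff_continuousAt]
    intro x
    by_cases hx : x = 0
    -- `P` is discontinuous at the origin, but there the factor `t` tends to zero
    · subst hx
      have hlim : Filter.Tendsto (fun x => t x * M) (𝓝 0) (𝓝 0) := by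
        have : Continuous fun x => t x * M := by fun_prop
        simpa [t] using this.tendsto 0
      have h0 : t 0 * c a (P 0) = 0 := by simp [t]
      rw [ContinuousAt, h0]
      refine squeeze_zero_norm (fun y => ?_) hlim
      rw [norm_mul, Real.norm_of_nonneg (ht0 y)]
      exact mul_le_mul_of_nonneg_left (hM a ha _) (ht0 y)
    · refine htc.continuousAt.mul ?_
      exact (((hc a).comp hPc hPA).continuousAt (isOpen_compl_singleton.mem_nhds hx))
  let q : Option s → X := fun o => o.elim e Subtype.val
  let k : Option s → X → ℝ := fun o x =>
    (1 + N * (1 - t x)) * o.elim (1 - t x) fun a => t x * c a (P x)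
  have hk : ∀ o, Continuous (k o) := by
    rintro (_ | a)
    · change Continuous fun x => (1 + N * (1 - t x)) * (1 - t x)
      fun_prop
    · exact (by fun_prop : Continuous fun x => 1 + N * (1 - t x)).mul (htcP a a.2)
  have hkb : ∀ o x, |k o x| ≤ (1 + N) * max 1 M := by
    intro o x
    have h1 := ht0 x
    have h2 := ht1 x
    have h3 : 0 ≤ 1 + N * (1 - t x) := by nlinarith
    simp only [k]
    rw [abs_mul, abs_of_nonneg h3]
    refine mul_le_mul (by nlinarith) ?_ (abs_nonneg _) (by positivity)
    rcases o with _ | a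
    · exact le_max_of_le_left (abs_le.2 ⟨by simp; linarith, by simp; linarith⟩)
    · refine le_max_of_le_right ?_
      change |t x * c a (P x)| ≤ M
      rw [abs_mul, abs_of_nonneg h1]
      exact (mul_le_of_le_one_left (abs_nonneg _) h2).trans (hM a a.2 _)
  obtain ⟨x, hx⟩ := exists_fixed_point_of_coeff q k hk hkb
  set v := ∑ a ∈ s, c a (P x) • a with hv
  have hvF : v ∈ F := F.sum_mem fun a ha => F.smul_mem _ (Submodule.subset_span ha)
  have hxe : x = (1 + N * (1 - t x)) • (t x • v + (1 - t x) • e) := by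
    conv_lhs => rw [hx]
    rw [Fintype.sum_option, smul_add, hv, Finset.smul_sum, Finset.smul_sum, ← Finset.sum_coe_sort s,
      add_comm]
    simp only [k, q, Option.elim, smul_smul]
  have hxr : r₁ ≤ ‖x‖ := by
    by_contra! hlt
    have htx : t x = ‖x‖ / r₁ := min_eq_right (by rw [div_le_one hr₁]; exact hlt.le)
    have htx1 : t x < 1 := by rw [htx, div_lt_one hr₁]; exact hlt
    have h1 := hfac v hvF (1 - t x) (by linarith) (by linarith [ht0 x]) fun hσ => by
      have hx0 : x ≠ 0 := by
        rintro rfl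
        simp [t] at hσ
      refine hcr _ ?_
      rw [hPn x hx0, max_eq_left ((min_le_right _ _).trans hlt.le)]
    rw [sub_sub_cancel] at h1
    have h2 := congrArg norm hxe
    rw [norm_smul, Real.norm_of_nonneg (by nlinarith : 0 ≤ 1 + N * (1 - t x))] at h2
    rw [← h2, htx, div_mul_cancel₀ _ hr₁.ne'] at h1
    exact lt_irrefl _ h1
  have ht : t x = 1 := min_eq_left (by rwa [one_le_div hr₁])
  have hPx : P x = (min r₂ ‖x‖ / ‖x‖) • x := by
    simp only [P]
    rw [max_eq_right (le_min hr.le hxr)]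
  refine ⟨x, hxr, ?_⟩
  rw [← hPx]
  simpa [ht] using hxe

/-- Approximate fixed points exist. The fixed point of the finite-rank extension serves if it lies in
the annulus; otherwise its projection to the outer sphere does, as `T` does not expand there. -/
lemma exists_approx_fixed_point {X : Type*} [NormedAddCommGroup X] [NormedSpace ℝ X]
    (hinf : ¬ FiniteDimensional ℝ X) {r₁ r₂ : ℝ} (hr₁ : 0 < r₁) (hr : r₁ < r₂) {T : X → X}
    (hT_cont : ContinuousOn T {x : X | r₁ ≤ ‖x‖ ∧ ‖x‖ ≤ r₂})
    (hT_comp : IsCompact (closure (T '' {x : X | r₁ ≤ ‖x‖ ∧ ‖x‖ ≤ r₂})))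
    (hCa : ∀ x : X, ‖x‖ = r₁ → ‖x‖ ≤ ‖T x‖) (hCb : ∀ x : X, ‖x‖ = r₂ → ‖T x‖ ≤ ‖x‖)
    {ε : ℝ} (hε : 0 < ε) :
    ∃ y ∈ {x : X | r₁ ≤ ‖x‖ ∧ ‖x‖ ≤ r₂}, ‖T y - y‖ ≤ 2 * ε := by
  obtain ⟨s, c, M, hM, hc, happ, hlow⟩ := exists_finite_rank_approx hT_cont hT_comp hr₁
    (fun y hy => ⟨hy.ge, hy.trans_le hr.le⟩) (fun y hy => hy ▸ hCa y hy) hε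
  obtain ⟨x, hx₁, hx⟩ := exists_fixed_point_finite_rank hinf hr₁ hr s c hM hc hlow
  have hx0 : ‖x‖ ≠ 0 := (hr₁.trans_le hx₁).ne'
  rcases le_or_gt ‖x‖ r₂ with hx₂ | hx₂
  · rw [min_eq_right hx₂, div_self hx0, one_smul] at hx
    refine ⟨x, ⟨hx₁, hx₂⟩, ?_⟩
    have := happ x ⟨hx₁, hx₂⟩
    rw [← hx, norm_sub_rev] at this
    linarith
  · rw [min_eq_left hx₂.le] at hx
    set y := (r₂ / ‖x‖) • x with hy
    have hr₂ : 0 < r₂ := hr₁.trans hr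
    have hyn : ‖y‖ = r₂ := by
      rw [hy, norm_smul, norm_div, norm_norm, div_mul_cancel₀ _ hx0, Real.norm_of_nonneg hr₂.le]
    have hyA : y ∈ {x : X | r₁ ≤ ‖x‖ ∧ ‖x‖ ≤ r₂} := ⟨hr.le.trans hyn.ge, hyn.le⟩
    have h1 := happ y hyA
    rw [← hx] at h1
    have h2 : ‖x - y‖ = ‖x‖ - r₂ := by
      have h3 : x - y = ((‖x‖ - r₂) / ‖x‖) • x := by
        rw [hy, sub_div, div_self hx0, sub_smul, one_smul]
      rw [h3, norm_smul, norm_div, norm_norm, div_mul_cancel₀ _ hx0,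
        Real.norm_of_nonneg (by linarith)]
    have h3 := hCb y hyn
    have h4 := norm_sub_norm_le x (T y)
    refine ⟨y, hyA, ?_⟩
    have h5 := norm_sub_le_norm_sub_add_norm_sub (T y) x y
    rw [norm_sub_rev (T y) x] at h5
    linarith

/-- **Fixed point theorem on an annulus of an infinite-dimensional normed space,
compressive form.** -/
theorem annulus_fixed_point_compressive
    {X : Type*} [NormedAddCommGroup X] [NormedSpace ℝ X]
    (hinf : ¬ FiniteDimensional ℝ X)
    (r₁ r₂ : ℝ) (hr₁ : 0 < r₁) (hr : r₁ < r₂)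
    (T : X → X)
    (hT_cont : ContinuousOn T {x : X | r₁ ≤ ‖x‖ ∧ ‖x‖ ≤ r₂})
    (hT_comp : IsCompact (closure (T '' {x : X | r₁ ≤ ‖x‖ ∧ ‖x‖ ≤ r₂})))
    (hCa : ∀ x : X, ‖x‖ = r₁ → ‖x‖ ≤ ‖T x‖)
    (hCb : ∀ x : X, ‖x‖ = r₂ → ‖T x‖ ≤ ‖x‖) :
    ∃ x : X, (r₁ ≤ ‖x‖ ∧ ‖x‖ ≤ r₂) ∧ T x = x := by
  set A := {x : X | r₁ ≤ ‖x‖ ∧ ‖x‖ ≤ r₂} with hA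
  have hAcl : IsClosed A :=
    (isClosed_le continuous_const continuous_norm).inter
      (isClosed_le continuous_norm continuous_const)
  have happ : ∀ n : ℕ, ∃ y ∈ A, ‖T y - y‖ ≤ 2 * (1 / ((n : ℝ) + 1)) := fun n =>
    exists_approx_fixed_point hinf hr₁ hr hT_cont hT_comp hCa hCb (by positivity)
  choose y hyA hy using happ
  obtain ⟨z, -, φ, hφ, hz⟩ := hT_comp.tendsto_subseq fun n => subset_closure ⟨y n, hyA n, rfl⟩
  have hdiff : Filter.Tendsto (fun n => T (y n) - y n) Filter.atTop (𝓝 0) := by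
    refine squeeze_zero_norm hy ?_
    simpa using (tendsto_one_div_add_atTop_nhds_zero_nat (𝕜 := ℝ)).const_mul 2
  have hyz : Filter.Tendsto (y ∘ φ) Filter.atTop (𝓝 z) := by
    simpa [Function.comp_def] using hz.sub (hdiff.comp hφ.tendsto_atTop)
  have hzA : z ∈ A := hAcl.mem_of_tendsto hyz (Filter.Eventually.of_forall fun n => hyA _)
  have hTz : Filter.Tendsto (fun n => T (y (φ n))) Filter.atTop (𝓝 (T z)) :=
    (hT_cont z hzA).tendsto.comp
      (tendsto_nhdsWithin_iff.2 ⟨hyz, Filter.Eventually.of_forall fun n => hyA _⟩)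
  exact ⟨z, hzA, tendsto_nhds_unique hTz hz⟩
end

section
/- Let X be a normed linear space, let K ⊆ X be a cone, let a > 0, and fix y ∈ K \ {0}. Then for every x ∈ K the element x + (a − ‖x‖)² y belongs to K \ {0}, the map r_a : K → K defined by r_a(x) = a · (x + (a − ‖x‖)² y) / ‖x + (a − ‖x‖)² y‖ is well defined and continuous, r_a(x) ∈ K and ‖r_a(x)‖ = a for every x ∈ K, and r_a(x) = x whenever ‖x‖ = a. In particular, K_a = {x ∈ K : ‖x‖ = a} is a retract of K. -/
/-!
The vector `x + (a - ‖x‖)² y` is a nonnegative combination of elements of the cone. If it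
vanished, `-x = (a - ‖x‖)² y` would lie in `K`, so `x = 0` by salience, leaving `a² y = 0`, which
is impossible. Hence the radial normalization to norm `a` is defined and continuous on `K`; it
stays in `K` because the scaling factor is nonnegative, and it fixes the points of norm `a`
because there the coefficient of `y` vanishes and the scaling factor is `1`.
-/

/-- **Example 4.5 (norm case): `K_a = {x ∈ K : ‖x‖ = a}` is a retract of the cone `K`,
via the explicit retraction `r_a(x) = a (x + (a - ‖x‖)² y)/‖x + (a - ‖x‖)² y‖`.** -/
theorem cone_sphere_retract
    {X : Type*} [NormedAddCommGroup X] [NormedSpace ℝ X]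
    (K : Set X) (hK_closed : IsClosed K)
    (hK_add : ∀ u ∈ K, ∀ v ∈ K, ∀ α β : ℝ, 0 ≤ α → 0 ≤ β → α • u + β • v ∈ K)
    (hK_salient : ∀ u ∈ K, -u ∈ K → u = 0)
    (a : ℝ) (ha : 0 < a) (y : X) (hy : y ∈ K) (hy0 : y ≠ 0) :
    (∀ x ∈ K, x + (a - ‖x‖) ^ 2 • y ∈ K ∧ x + (a - ‖x‖) ^ 2 • y ≠ 0) ∧
    ContinuousOn
      (fun x : X => (a / ‖x + (a - ‖x‖) ^ 2 • y‖) • (x + (a - ‖x‖) ^ 2 • y)) K ∧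
    (∀ x ∈ K,
      (a / ‖x + (a - ‖x‖) ^ 2 • y‖) • (x + (a - ‖x‖) ^ 2 • y) ∈ K ∧
      ‖(a / ‖x + (a - ‖x‖) ^ 2 • y‖) • (x + (a - ‖x‖) ^ 2 • y)‖ = a) ∧
    (∀ x ∈ K, ‖x‖ = a →
      (a / ‖x + (a - ‖x‖) ^ 2 • y‖) • (x + (a - ‖x‖) ^ 2 • y) = x) ∧
    (∃ ρ : X → X, ContinuousOn ρ K ∧
      (∀ x ∈ K, ρ x ∈ {x ∈ K | ‖x‖ = a}) ∧
      (∀ x ∈ {x ∈ K | ‖x‖ = a}, ρ x = x)) := by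
  have hmem : ∀ x ∈ K, x + (a - ‖x‖) ^ 2 • y ∈ K := fun x hx => by
    simpa using hK_add x hx y hy 1 ((a - ‖x‖) ^ 2) zero_le_one (sq_nonneg _)
  have hne : ∀ x ∈ K, x + (a - ‖x‖) ^ 2 • y ≠ 0 := by
    intro x hx h
    have hneg : -x ∈ K := by
      rw [neg_eq_of_add_eq_zero_right h]
      simpa using hK_add y hy y hy ((a - ‖x‖) ^ 2) 0 (sq_nonneg _) le_rfl
    have hx0 := hK_salient x hx hneg
    subst hx0
    simp [ha.ne', hy0] at h
  have hcont : ContinuousOn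
      (fun x : X => (a / ‖x + (a - ‖x‖) ^ 2 • y‖) • (x + (a - ‖x‖) ^ 2 • y)) K := by
    have hc : Continuous fun x : X => x + (a - ‖x‖) ^ 2 • y := by fun_prop
    exact (continuousOn_const.div hc.norm.continuousOn
      fun x hx => norm_ne_zero_iff.mpr (hne x hx)).smul hc.continuousOn
  have hmaps : ∀ x ∈ K,
      (a / ‖x + (a - ‖x‖) ^ 2 • y‖) • (x + (a - ‖x‖) ^ 2 • y) ∈ K ∧
      ‖(a / ‖x + (a - ‖x‖) ^ 2 • y‖) • (x + (a - ‖x‖) ^ 2 • y)‖ = a := by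
    intro x hx
    constructor
    · simpa only [zero_smul, add_zero] using hK_add _ (hmem x hx) y hy
        (a / ‖x + (a - ‖x‖) ^ 2 • y‖) 0 (by positivity) le_rfl
    · rw [norm_smul, norm_div, norm_norm, Real.norm_of_nonneg ha.le,
        div_mul_cancel₀ _ (norm_ne_zero_iff.mpr (hne x hx))]
  have hfix : ∀ x ∈ K, ‖x‖ = a →
      (a / ‖x + (a - ‖x‖) ^ 2 • y‖) • (x + (a - ‖x‖) ^ 2 • y) = x := by
    intro x _ hxa
    simp [hxa, ha.ne']
  exact ⟨fun x hx => ⟨hmem x hx, hne x hx⟩, hcont, hmaps, hfix,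
    _, hcont, hmaps, fun x hx => hfix x hx.1 hx.2⟩
end

section
/- Let X be a normed linear space, let K ⊆ X be a cone, and let l : X → ℝ be a continuous functional that is strictly positive on the cone (l(x) > 0 for all x ∈ K \ {0}) and positively homogeneous. Let a > 0 and fix y ∈ K \ {0}. Then for every x ∈ K the element x + (a − l(x))² y belongs to K \ {0} (so l(x + (a − l(x))² y) > 0), the map r_a : K → K defined by r_a(x) = a · (x + (a − l(x))² y) / l(x + (a − l(x))² y) is well defined and continuous, r_a(x) ∈ K and l(r_a(x)) = a for every x ∈ K, and r_a(x) = x whenever l(x) = a. In particular, K^l_a = {x ∈ K : l(x) = a} is a retract of K. -/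
/-!
The perturbation `x + (a - l x)² y` stays in the cone, and it never vanishes: if it did, then
`-x = (a - l x)² y` would lie in `K`, so `x = 0` by salience, and `l 0 = 0` would leave
`a² y = 0`, contradicting `a ≠ 0` and `y ≠ 0`. Hence `l` is positive on it, and radial rescaling
to the level `a` is continuous and, by homogeneity, lands in `{l = a}`. On that level set the
perturbation is zero and the scaling factor is `1`.
-/

/-- **Example 4.5 (strictly positive functional case): `K^l_a = {x ∈ K : l(x) = a}`
is a retract of the cone `K`, via the explicit retraction
`r_a(x) = a (x + (a - l(x))² y)/l(x + (a - l(x))² y)`.** -/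
theorem cone_level_set_retract_strictly_positive
    {X : Type*} [NormedAddCommGroup X] [NormedSpace ℝ X]
    (K : Set X) (hK_closed : IsClosed K)
    (hK_add : ∀ u ∈ K, ∀ v ∈ K, ∀ α β : ℝ, 0 ≤ α → 0 ≤ β → α • u + β • v ∈ K)
    (hK_salient : ∀ u ∈ K, -u ∈ K → u = 0)
    (l : X → ℝ) (hl_cont : Continuous l)
    (hl_pos : ∀ x ∈ K, x ≠ 0 → 0 < l x)
    (hl_hom : ∀ (lam : ℝ), 0 ≤ lam → ∀ x : X, l (lam • x) = lam * l x)
    (a : ℝ) (ha : 0 < a) (y : X) (hy : y ∈ K) (hy0 : y ≠ 0) :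
    (∀ x ∈ K, (x + (a - l x) ^ 2 • y ∈ K ∧ x + (a - l x) ^ 2 • y ≠ 0) ∧
      0 < l (x + (a - l x) ^ 2 • y)) ∧
    ContinuousOn
      (fun x : X => (a / l (x + (a - l x) ^ 2 • y)) • (x + (a - l x) ^ 2 • y)) K ∧
    (∀ x ∈ K,
      (a / l (x + (a - l x) ^ 2 • y)) • (x + (a - l x) ^ 2 • y) ∈ K ∧
      l ((a / l (x + (a - l x) ^ 2 • y)) • (x + (a - l x) ^ 2 • y)) = a) ∧
    (∀ x ∈ K, l x = a →
      (a / l (x + (a - l x) ^ 2 • y)) • (x + (a - l x) ^ 2 • y) = x) ∧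
    (∃ ρ : X → X, ContinuousOn ρ K ∧
      (∀ x ∈ K, ρ x ∈ {x ∈ K | l x = a}) ∧
      (∀ x ∈ {x ∈ K | l x = a}, ρ x = x)) := by
  have hmem : ∀ x ∈ K, x + (a - l x) ^ 2 • y ∈ K := fun x hx => by
    simpa using hK_add x hx y hy 1 ((a - l x) ^ 2) zero_le_one (sq_nonneg _)
  have hne : ∀ x ∈ K, x + (a - l x) ^ 2 • y ≠ 0 := by
    intro x hx h
    have hneg : -x ∈ K := by
      rw [neg_eq_of_add_eq_zero_right h]
      simpa using hK_add y hy y hy ((a - l x) ^ 2) 0 (sq_nonneg _) le_rfl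
    have hx0 : x = 0 := hK_salient x hx hneg
    have hl0 : l 0 = 0 := by simpa using hl_hom 0 le_rfl 0
    rw [hx0, hl0, sub_zero, zero_add] at h
    exact (smul_ne_zero (pow_ne_zero 2 ha.ne') hy0) h
  have hpos : ∀ x ∈ K, 0 < l (x + (a - l x) ^ 2 • y) := fun x hx =>
    hl_pos _ (hmem x hx) (hne x hx)
  have hcont : ContinuousOn
      (fun x : X => (a / l (x + (a - l x) ^ 2 • y)) • (x + (a - l x) ^ 2 • y)) K := by
    have hp : Continuous fun x : X => x + (a - l x) ^ 2 • y := by fun_prop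
    exact (continuousOn_const.div (hl_cont.comp hp).continuousOn
      fun x hx => (hpos x hx).ne').smul hp.continuousOn
  have hval : ∀ x ∈ K,
      (a / l (x + (a - l x) ^ 2 • y)) • (x + (a - l x) ^ 2 • y) ∈ K ∧
      l ((a / l (x + (a - l x) ^ 2 • y)) • (x + (a - l x) ^ 2 • y)) = a := by
    intro x hx
    have hc := (div_pos ha (hpos x hx)).le
    refine ⟨?_, ?_⟩
    · simpa only [zero_smul, add_zero] using hK_add _ (hmem x hx) y hy _ 0 hc le_rfl
    · rw [hl_hom _ hc, div_mul_cancel₀ _ (hpos x hx).ne']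
  have hfix : ∀ x ∈ K, l x = a →
      (a / l (x + (a - l x) ^ 2 • y)) • (x + (a - l x) ^ 2 • y) = x := by
    intro x _ hxa
    simp [hxa, ha.ne']
  exact ⟨fun x hx => ⟨⟨hmem x hx, hne x hx⟩, hpos x hx⟩, hcont, hval, hfix,
    _, hcont, hval, fun x hx => hfix x hx.1 hx.2⟩
end

section
/- Let X be a normed linear space, let K ⊆ X be a cone, and let l : X → ℝ be a continuous linear functional that is positive on the cone (l(x) ≥ 0 for all x ∈ K) and does not vanish identically on K. Fix y ∈ K with l(y) ≠ 0 and let a > 0. Then for every x ∈ K one has l(x + (a − l(x))² y) = l(x) + (a − l(x))² l(y) > 0, the map r_a : K → K defined by r_a(x) = a · (x + (a − l(x))² y) / l(x + (a − l(x))² y) is well defined and continuous, r_a(x) ∈ K and l(r_a(x)) = a for every x ∈ K, and r_a(x) = x whenever l(x) = a. In particular, K^l_a = {x ∈ K : l(x) = a} is a retract of K. -/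
/-!
Since `l y > 0`, the number `l (x + (a - l x)² y) = l x + (a - l x)² l y` is a sum of two
nonnegative terms on `K`, and they do not vanish simultaneously: if `l x = 0`, the second one is
`a² l y > 0`. Hence the normalisation to level `a` is well defined and continuous on `K`, and it
stays in `K` by the cone property. On the level `l x = a` the perturbation vanishes, so the map
is the identity there.
-/

/-- **Example 4.5 (linear functional case): for a continuous linear functional `l`
which is positive but not identically zero on the cone `K`, the level set
`K^l_a = {x ∈ K : l(x) = a}` is a retract of `K`, via the explicit retraction
`r_a(x) = a (x + (a - l(x))² y)/l(x + (a - l(x))² y)`.** -/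
theorem cone_level_set_retract_linear
    {X : Type*} [NormedAddCommGroup X] [NormedSpace ℝ X]
    (K : Set X) (hK_closed : IsClosed K)
    (hK_add : ∀ u ∈ K, ∀ v ∈ K, ∀ α β : ℝ, 0 ≤ α → 0 ≤ β → α • u + β • v ∈ K)
    (hK_salient : ∀ u ∈ K, -u ∈ K → u = 0)
    (l : X →L[ℝ] ℝ) (hl_pos : ∀ x ∈ K, 0 ≤ l x)
    (y : X) (hy : y ∈ K) (hy0 : l y ≠ 0)
    (a : ℝ) (ha : 0 < a) :
    (∀ x ∈ K, l (x + (a - l x) ^ 2 • y) = l x + (a - l x) ^ 2 * l y ∧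
      0 < l (x + (a - l x) ^ 2 • y)) ∧
    ContinuousOn
      (fun x : X => (a / l (x + (a - l x) ^ 2 • y)) • (x + (a - l x) ^ 2 • y)) K ∧
    (∀ x ∈ K,
      (a / l (x + (a - l x) ^ 2 • y)) • (x + (a - l x) ^ 2 • y) ∈ K ∧
      l ((a / l (x + (a - l x) ^ 2 • y)) • (x + (a - l x) ^ 2 • y)) = a) ∧
    (∀ x ∈ K, l x = a →
      (a / l (x + (a - l x) ^ 2 • y)) • (x + (a - l x) ^ 2 • y) = x) ∧
    (∃ ρ : X → X, ContinuousOn ρ K ∧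
      (∀ x ∈ K, ρ x ∈ {x ∈ K | l x = a}) ∧
      (∀ x ∈ {x ∈ K | l x = a}, ρ x = x)) := by
  have hy_pos : 0 < l y := lt_of_le_of_ne (hl_pos y hy) hy0.symm
  have hl_eq : ∀ x, l (x + (a - l x) ^ 2 • y) = l x + (a - l x) ^ 2 * l y := by
    intro x
    simp
  have hpos : ∀ x ∈ K, 0 < l (x + (a - l x) ^ 2 • y) := by
    intro x hx
    rw [hl_eq]
    rcases (hl_pos x hx).eq_or_lt with h | h
    · rw [← h]
      simp only [sub_zero, zero_add]
      positivity
    · positivity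
  have hcont : ContinuousOn
      (fun x : X => (a / l (x + (a - l x) ^ 2 • y)) • (x + (a - l x) ^ 2 • y)) K := by
    have hc : Continuous (fun x : X => x + (a - l x) ^ 2 • y) := by fun_prop
    exact (continuousOn_const.div (l.continuous.comp hc).continuousOn
      fun x hx => (hpos x hx).ne').smul hc.continuousOn
  have hmem : ∀ x ∈ K,
      (a / l (x + (a - l x) ^ 2 • y)) • (x + (a - l x) ^ 2 • y) ∈ K ∧
      l ((a / l (x + (a - l x) ^ 2 • y)) • (x + (a - l x) ^ 2 • y)) = a := by
    intro x hx
    have hp := hpos x hx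
    constructor
    · have hc : 0 ≤ a / l (x + (a - l x) ^ 2 • y) := by positivity
      rw [smul_add, smul_smul]
      exact hK_add x hx y hy _ _ hc (mul_nonneg hc (sq_nonneg _))
    · rw [map_smul, smul_eq_mul, div_mul_cancel₀ _ hp.ne']
  have hfix : ∀ x ∈ K, l x = a →
      (a / l (x + (a - l x) ^ 2 • y)) • (x + (a - l x) ^ 2 • y) = x := by
    intro x _ h
    simp [h, ha.ne']
  exact ⟨fun x hx => ⟨hl_eq x, hpos x hx⟩, hcont, hmem, hfix, _, hcont,
    fun x hx => ⟨(hmem x hx).1, (hmem x hx).2⟩, fun x hx => hfix x hx.1 hx.2⟩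
end
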